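/- arXiv:1906.11029 — 3 statements merged into one kernel-verified Lean document; each statement's English description precedes it below -/
import Mathlib

section
/- Let ω ⊆ ℝᵈ be open, let φ_b, φ_t : ω → ℝ be twice continuously differentiable with φ_b(x) < φ_t(x) for all x ∈ ω, and define φ(x,t̂) = (1−t̂)φ_b(x)+t̂φ_t(x), δ = φ_t − φ_b, and Φ(x,t̂) = (x, φ(x,t̂)). Let v : K° → ℝ^{d+1} be a continuously differentiable vector field on the open tent K° = {(x,t) : x ∈ ω, φ_b(x) < t < φ_t(x)}, and define the Piola transform v̂ : ω × (0,1) → ℝ^{d+1} by v̂ = (det Φ′) (Φ′)⁻¹ (v ∘ Φ). Then div_{x,t̂} v̂ = δ · ((div_{x,t} v) ∘ Φ) on ω × (0,1), where div denotes the full divergence in all d+1 variables. -/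
/-- The interpolated front `φ(x, t̂) = (1 − t̂) φ_b(x) + t̂ φ_t(x)`. -/
def tentPhi {d : ℕ} (φb φt : (Fin d → ℝ) → ℝ) (x : Fin d → ℝ) (t : ℝ) : ℝ :=
  (1 - t) * φb x + t * φt x

/-- The tent map `Φ(x, t̂) = (x, φ(x, t̂))`. -/
def tentMap {d : ℕ} (φb φt : (Fin d → ℝ) → ℝ) (p : (Fin d → ℝ) × ℝ) :
    (Fin d → ℝ) × ℝ :=
  (p.1, tentPhi φb φt p.1 p.2)

/-- The Jacobian of the tent map `Φ` as the block matrix `Φ′ = [[I_d, 0], [∇_xφᵀ, δ]]`,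
indexed by `Fin d ⊕ Unit`. -/
noncomputable def tentJacobianMatrix {d : ℕ} (φb φt : (Fin d → ℝ) → ℝ)
    (x : Fin d → ℝ) (t : ℝ) : Matrix (Fin d ⊕ Unit) (Fin d ⊕ Unit) ℝ :=
  Matrix.fromBlocks 1 0
    (Matrix.of fun (_ : Unit) j => fderiv ℝ (fun y => tentPhi φb φt y t) x (Pi.single j 1))
    (Matrix.of fun (_ : Unit) (_ : Unit) => φt x - φb x)

/-- Identify a spacetime vector `(w, s) ∈ ℝᵈ × ℝ` with a vector indexed by
`Fin d ⊕ Unit`. -/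
def toSumVec {d : ℕ} (w : (Fin d → ℝ) × ℝ) : Fin d ⊕ Unit → ℝ :=
  Sum.elim w.1 (fun _ => w.2)

/-- Identify a vector indexed by `Fin d ⊕ Unit` with a spacetime vector in `ℝᵈ × ℝ`. -/
def ofSumVec {d : ℕ} (w : Fin d ⊕ Unit → ℝ) : (Fin d → ℝ) × ℝ :=
  (fun j => w (Sum.inl j), w (Sum.inr ()))

/-- The Piola transform `v̂ = (det Φ′) (Φ′)⁻¹ (v ∘ Φ)` of a spacetime vector field `v`
under the tent map `Φ`, using `det Φ′ = δ`. -/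
noncomputable def piolaTransform {d : ℕ} (φb φt : (Fin d → ℝ) → ℝ)
    (v : (Fin d → ℝ) × ℝ → (Fin d → ℝ) × ℝ) (p : (Fin d → ℝ) × ℝ) :
    (Fin d → ℝ) × ℝ :=
  ofSumVec ((φt p.1 - φb p.1) •
    (tentJacobianMatrix φb φt p.1 p.2)⁻¹.mulVec (toSumVec (v (tentMap φb φt p))))

/-- The full spacetime divergence of a vector field on `ℝᵈ × ℝ` (sum of the partial
derivatives of all `d + 1` components in all `d + 1` variables). -/
noncomputable def divST {d : ℕ} (w : (Fin d → ℝ) × ℝ → (Fin d → ℝ) × ℝ)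
    (p : (Fin d → ℝ) × ℝ) : ℝ :=
  (∑ j : Fin d, fderiv ℝ (fun q => (w q).1 j) p (Pi.single j 1, 0))
    + fderiv ℝ (fun q => (w q).2) p (0, 1)

theorem piola_aux_formula {d : ℕ} (φb φt : (Fin d → ℝ) → ℝ)
    (v : (Fin d → ℝ) × ℝ → (Fin d → ℝ) × ℝ) (p : (Fin d → ℝ) × ℝ)
    (hb : DifferentiableAt ℝ φb p.1) (ht : DifferentiableAt ℝ φt p.1)
    (hlt : φb p.1 < φt p.1) :
    piolaTransform φb φt v p =
      (fun j => (φt p.1 - φb p.1) * (v (tentMap φb φt p)).1 j,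
        (v (tentMap φb φt p)).2 - ∑ j, ((1 - p.2) * fderiv ℝ φb p.1 (Pi.single j 1)
          + p.2 * fderiv ℝ φt p.1 (Pi.single j 1)) * (v (tentMap φb φt p)).1 j) := by
  obtain ⟨x, t⟩ := p
  simp only at hb ht hlt ⊢
  have hδ : φt x - φb x ≠ 0 := sub_ne_zero.mpr hlt.ne'
  have hg : ∀ j : Fin d, fderiv ℝ (fun y => tentPhi φb φt y t) x (Pi.single j 1)
      = (1 - t) * fderiv ℝ φb x (Pi.single j 1) + t * fderiv ℝ φt x (Pi.single j 1) := by
    intro j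
    have h : HasFDerivAt (fun y => tentPhi φb φt y t)
        ((1 - t) • fderiv ℝ φb x + t • fderiv ℝ φt x) x :=
      (hb.hasFDerivAt.const_mul (1 - t)).add (ht.hasFDerivAt.const_mul t)
    rw [h.fderiv]; simp
  set u := v (tentMap φb φt (x, t)) with hu
  set M := tentJacobianMatrix φb φt x t with hM
  have hdet : IsUnit M.det := by
    have : M.det = φt x - φb x := by
      rw [hM, tentJacobianMatrix, Matrix.det_fromBlocks_zero₁₂]
      simp
    rw [this]; exact isUnit_iff_ne_zero.mpr hδ
  have key : M.mulVec (toSumVec (fun j => (φt x - φb x) * u.1 j,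
        u.2 - ∑ j, ((1 - t) * fderiv ℝ φb x (Pi.single j 1)
          + t * fderiv ℝ φt x (Pi.single j 1)) * u.1 j)) = (φt x - φb x) • toSumVec u := by
    rw [hM, tentJacobianMatrix, toSumVec, Matrix.fromBlocks_mulVec]
    ext i
    rcases i with i | i
    · simp [toSumVec, Function.comp_def]
    · simp only [toSumVec, Function.comp_def, Sum.elim_inr, Sum.elim_inl, Pi.add_apply,
        Matrix.mulVec, dotProduct, Matrix.of_apply, hg, Pi.smul_apply, smul_eq_mul,
        Finset.univ_unique, Finset.sum_singleton]
      rw [mul_sub, Finset.mul_sum]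
      have : ∀ a b c : ℝ, a = c → a + (b - c) = b := by intro a b c h; linarith
      apply this
      exact Finset.sum_congr rfl fun j _ => by ring
  unfold piolaTransform
  simp only [← hM, ← hu]
  rw [← Matrix.mulVec_smul, ← key, Matrix.mulVec_mulVec, Matrix.nonsing_inv_mul _ hdet,
    Matrix.one_mulVec]
  rfl

/-- Algebraic transformation of the divergence by the Piola transform: for `C²` fronts
with `φ_b < φ_t` on an open set `ω` and a `C¹` vector field `v` on the open tent `K°`,
the Piola transform `v̂ = (det Φ′)(Φ′)⁻¹(v ∘ Φ)` satisfies
`div_{x,t̂} v̂ = δ · ((div_{x,t} v) ∘ Φ)` on `ω × (0,1)`. -/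
theorem piola_divergence (d : ℕ) (ω : Set (Fin d → ℝ)) (hω : IsOpen ω)
    (φb φt : (Fin d → ℝ) → ℝ)
    (hb : ∀ x ∈ ω, ContDiffAt ℝ 2 φb x)
    (ht : ∀ x ∈ ω, ContDiffAt ℝ 2 φt x)
    (hlt : ∀ x ∈ ω, φb x < φt x)
    (v : (Fin d → ℝ) × ℝ → (Fin d → ℝ) × ℝ)
    (hv : ∀ p : (Fin d → ℝ) × ℝ,
      p.1 ∈ ω → φb p.1 < p.2 → p.2 < φt p.1 → ContDiffAt ℝ 1 v p) :
    ∀ x ∈ ω, ∀ t ∈ Set.Ioo (0 : ℝ) 1,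
      divST (piolaTransform φb φt v) (x, t)
        = (φt x - φb x) * divST v (tentMap φb φt (x, t)) := by
  intro x hx t htt
  obtain ⟨ht0, ht1⟩ := htt
  have hδ := hlt x hx
  have hbd : ∀ y ∈ ω, DifferentiableAt ℝ φb y := fun y hy => (hb y hy).differentiableAt (by norm_num)
  have htd : ∀ y ∈ ω, DifferentiableAt ℝ φt y := fun y hy => (ht y hy).differentiableAt (by norm_num)
  have hev : ∀ᶠ q : (Fin d → ℝ) × ℝ in nhds (x, t), q.1 ∈ ω :=
    continuous_fst.continuousAt.eventually (hω.mem_nhds hx)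
  have hform : piolaTransform φb φt v =ᶠ[nhds (x, t)] fun p =>
      (fun j => (φt p.1 - φb p.1) * (v (tentMap φb φt p)).1 j,
        (v (tentMap φb φt p)).2 - ∑ j, ((1 - p.2) * fderiv ℝ φb p.1 (Pi.single j 1)
          + p.2 * fderiv ℝ φt p.1 (Pi.single j 1)) * (v (tentMap φb φt p)).1 j) := by
    filter_upwards [hev] with q hq
    exact piola_aux_formula φb φt v q (hbd _ hq) (htd _ hq) (hlt _ hq)
  -- derivatives of the data
  have hfst : HasFDerivAt (fun q : (Fin d → ℝ) × ℝ => q.1)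
    (ContinuousLinearMap.fst ℝ (Fin d → ℝ) ℝ) (x, t) := hasFDerivAt_fst
  have hsnd : HasFDerivAt (fun q : (Fin d → ℝ) × ℝ => q.2)
    (ContinuousLinearMap.snd ℝ (Fin d → ℝ) ℝ) (x, t) := hasFDerivAt_snd
  have hB : HasFDerivAt (fun q : (Fin d → ℝ) × ℝ => φb q.1)
      ((fderiv ℝ φb x).comp (ContinuousLinearMap.fst ℝ (Fin d → ℝ) ℝ)) (x, t) :=
    HasFDerivAt.comp (g := φb) (x, t) (hbd x hx).hasFDerivAt hfst
  have hT : HasFDerivAt (fun q : (Fin d → ℝ) × ℝ => φt q.1)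
      ((fderiv ℝ φt x).comp (ContinuousLinearMap.fst ℝ (Fin d → ℝ) ℝ)) (x, t) :=
    HasFDerivAt.comp (g := φt) (x, t) (htd x hx).hasFDerivAt hfst
  have hB2 : ∀ j : Fin d, ∃ L : (Fin d → ℝ) →L[ℝ] ℝ,
      HasFDerivAt (fun q : (Fin d → ℝ) × ℝ => fderiv ℝ φb q.1 (Pi.single j 1))
      (L.comp (ContinuousLinearMap.fst ℝ (Fin d → ℝ) ℝ)) (x, t) := by
    intro j
    have h1 : DifferentiableAt ℝ (fderiv ℝ φb) x :=
      ((hb x hx).fderiv_right (m := 1) (by norm_num)).differentiableAt (by norm_num)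
    have h2 : DifferentiableAt ℝ (fun y => fderiv ℝ φb y (Pi.single j 1)) x :=
      h1.clm_apply (differentiableAt_const _)
    exact ⟨_, HasFDerivAt.comp (g := fun y => fderiv ℝ φb y (Pi.single j 1)) (x, t)
      h2.hasFDerivAt hfst⟩
  have hT2 : ∀ j : Fin d, ∃ L : (Fin d → ℝ) →L[ℝ] ℝ,
      HasFDerivAt (fun q : (Fin d → ℝ) × ℝ => fderiv ℝ φt q.1 (Pi.single j 1))
      (L.comp (ContinuousLinearMap.fst ℝ (Fin d → ℝ) ℝ)) (x, t) := by
    intro j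
    have h1 : DifferentiableAt ℝ (fderiv ℝ φt) x :=
      ((ht x hx).fderiv_right (m := 1) (by norm_num)).differentiableAt (by norm_num)
    have h2 : DifferentiableAt ℝ (fun y => fderiv ℝ φt y (Pi.single j 1)) x :=
      h1.clm_apply (differentiableAt_const _)
    exact ⟨_, HasFDerivAt.comp (g := fun y => fderiv ℝ φt y (Pi.single j 1)) (x, t)
      h2.hasFDerivAt hfst⟩
  choose Lb hLb using hB2
  choose Lt hLt using hT2
  have hΦ := hfst.prodMk (((hsnd.const_sub 1).mul hB).add (hsnd.mul hT))
  have hvd : DifferentiableAt ℝ v (tentMap φb φt (x, t)) := by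
    refine (hv _ hx ?_ ?_).differentiableAt (by norm_num)
    · simp only [tentMap, tentPhi]; nlinarith
    · simp only [tentMap, tentPhi]; nlinarith
  set A := fderiv ℝ v (tentMap φb φt (x, t)) with hA
  have hA' : HasFDerivAt v A (tentMap φb φt (x, t)) := hvd.hasFDerivAt
  have hvΦ := HasFDerivAt.comp (g := v) (f := tentMap φb φt) (x, t) hA' hΦ
  have hv1 : ∀ j, HasFDerivAt (fun q => (v (tentMap φb φt q)).1 j) _ (x, t) :=
    fun j => (hasFDerivAt_pi'.1 hvΦ.fst j)
  have hv2 := hvΦ.snd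
  have hw1 : ∀ j, HasFDerivAt (fun q => (v q).1 j) _ (tentMap φb φt (x, t)) :=
    fun j => (hasFDerivAt_pi'.1 hA'.fst j)
  have hw2 := hA'.snd
  have e1 : ∀ j, fderiv ℝ (fun q => (piolaTransform φb φt v q).1 j) (x, t) = _ := fun j =>
    (Filter.EventuallyEq.fderiv_eq (hform.mono fun q hq => by
      simp only [hq]; rfl)).trans ((hT.sub hB).mul (hv1 j)).fderiv
  have e2 : fderiv ℝ (fun q => (piolaTransform φb φt v q).2) (x, t) = _ :=
    (Filter.EventuallyEq.fderiv_eq (hform.mono fun q hq => by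
      simp only [hq]; rfl)).trans (hv2.sub (HasFDerivAt.fun_sum (u := Finset.univ) fun j _ =>
        (((hsnd.const_sub 1).mul (hLb j)).add (hsnd.mul (hLt j))).mul (hv1 j))).fderiv
  have hs : ∀ (w : Fin d → ℝ) (s : ℝ), A (w, s) = A (w, 0) + s • A (0, 1) := by
    intro w s
    rw [← map_smul, ← map_add]; simp
  have hs0 : ∀ s : ℝ, A (0, s) = s • A (0, 1) := by
    intro s
    rw [← map_smul]; simp
  have f1 : ∀ j, fderiv ℝ (fun q => (piolaTransform φb φt v q).1 j) (x, t) (Pi.single j 1, 0)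
      = (φt x - φb x) * ((A (Pi.single j 1, 0)).1 j
        + ((1 - t) * fderiv ℝ φb x (Pi.single j 1) + t * fderiv ℝ φt x (Pi.single j 1))
          * (A (0, 1)).1 j)
        + (v (tentMap φb φt (x, t))).1 j
          * (fderiv ℝ φt x (Pi.single j 1) - fderiv ℝ φb x (Pi.single j 1)) := by
    intro j
    have := hs (Pi.single j 1)
      ((1 - t) * fderiv ℝ φb x (Pi.single j 1) + t * fderiv ℝ φt x (Pi.single j 1))
    rw [e1]
    simp [this]
  have f2 : fderiv ℝ (fun q => (piolaTransform φb φt v q).2) (x, t) (0, 1)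
      = (φt x - φb x) * (A (0, 1)).2 - ∑ j,
        (((1 - t) * fderiv ℝ φb x (Pi.single j 1) + t * fderiv ℝ φt x (Pi.single j 1))
          * ((φt x - φb x) * (A (0, 1)).1 j)
        + (v (tentMap φb φt (x, t))).1 j
          * (fderiv ℝ φt x (Pi.single j 1) - fderiv ℝ φb x (Pi.single j 1))) := by
    have := hs0 (-φb x + φt x)
    rw [e2]
    simp [this, ContinuousLinearMap.sum_apply]
    rw [show -φb x + φt x = φt x - φb x by ring]
    congr 1
    exact Finset.sum_congr rfl fun j _ => by ring
  unfold divST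
  rw [f2, Finset.sum_congr rfl fun j _ => f1 j, hw2.fderiv]
  simp only [fun j => (hw1 j).fderiv, ContinuousLinearMap.comp_apply, ContinuousLinearMap.proj_apply,
    ContinuousLinearMap.coe_fst', ContinuousLinearMap.coe_snd', mul_add, Finset.mul_sum]
  rw [add_sub_left_comm, ← Finset.sum_sub_distrib, add_comm]
  congr 1
  exact Finset.sum_congr rfl fun j _ => by ring
end

section
/- Let ε, μ > 0 and g ∈ ℝ³ with |g|² < εμ. Then the linear map L : ℝ³×ℝ³ → ℝ³×ℝ³ defined by L(E, H) = (εE − H×g, μH + E×g) is bijective, and for any (w_E, w_H) ∈ ℝ³×ℝ³ the unique solution (E, H) of L(E,H) = (w_E, w_H) is given in closed form by E = (εμ − |g|²)⁻¹ (I − (εμ)⁻¹ g gᵀ)(μ w_E + w_H × g) and H = (εμ − |g|²)⁻¹ (I − (εμ)⁻¹ g gᵀ)(ε w_H − w_E × g), where g gᵀ is the rank-one matrix with entries gᵢgⱼ. -/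
/-- Euclidean dot product on `ℝ³`. -/
def dot3 (u v : Fin 3 → ℝ) : ℝ := ∑ i, u i * v i

/-- Cross product on `ℝ³`. -/
def cross3 (u v : Fin 3 → ℝ) : Fin 3 → ℝ :=
  ![u 1 * v 2 - u 2 * v 1, u 2 * v 0 - u 0 * v 2, u 0 * v 1 - u 1 * v 0]

/-- The pointwise operator `L(E, H) = (εE − H×g, μH + E×g)` of the mapped tent
pitching scheme. -/
def tentOp (ε μ : ℝ) (g : Fin 3 → ℝ) (u : (Fin 3 → ℝ) × (Fin 3 → ℝ)) :
    (Fin 3 → ℝ) × (Fin 3 → ℝ) :=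
  (fun i => ε * u.1 i - cross3 u.2 g i, fun i => μ * u.2 i + cross3 u.1 g i)

/-- The projection matrix `I − (εμ)⁻¹ g gᵀ`. -/
noncomputable def projMat (ε μ : ℝ) (g : Fin 3 → ℝ) : Matrix (Fin 3) (Fin 3) ℝ :=
  1 - Matrix.of (fun i j => (ε * μ)⁻¹ * (g i * g j))

/-- Under the strict causality condition `|g|² < εμ`, the operator
`L(E, H) = (εE − H×g, μH + E×g)` is bijective, and its inverse is given in closed form:
`L(E,H) = (w_E, w_H)` iff
`E = (εμ − |g|²)⁻¹ (I − (εμ)⁻¹ g gᵀ)(μ w_E + w_H × g)` and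
`H = (εμ − |g|²)⁻¹ (I − (εμ)⁻¹ g gᵀ)(ε w_H − w_E × g)`. -/
theorem tentOp_bijective_and_closed_form_inverse (ε μ : ℝ) (hε : 0 < ε) (hμ : 0 < μ)
    (g : Fin 3 → ℝ) (hg : dot3 g g < ε * μ) :
    Function.Bijective (tentOp ε μ g) ∧
    ∀ (wE wH E H : Fin 3 → ℝ),
      tentOp ε μ g (E, H) = (wE, wH) ↔
        (E = (ε * μ - dot3 g g)⁻¹ •
              (projMat ε μ g).mulVec (fun j => μ * wE j + cross3 wH g j) ∧
         H = (ε * μ - dot3 g g)⁻¹ •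
              (projMat ε μ g).mulVec (fun j => ε * wH j - cross3 wE g j)) := by
  have hD : dot3 g g = g 0 * g 0 + g 1 * g 1 + g 2 * g 2 := by
    simp [dot3, Fin.sum_univ_three]
  have hm : ε * μ ≠ 0 := by positivity
  have hc : ε * μ - dot3 g g ≠ 0 := by linarith
  have key : ∀ (wE wH E H : Fin 3 → ℝ),
      tentOp ε μ g (E, H) = (wE, wH) ↔
        (E = (ε * μ - dot3 g g)⁻¹ •
              (projMat ε μ g).mulVec (fun j => μ * wE j + cross3 wH g j) ∧
         H = (ε * μ - dot3 g g)⁻¹ •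
              (projMat ε μ g).mulVec (fun j => ε * wH j - cross3 wE g j)) := by
    intro wE wH E H
    have hP : ∀ (v : Fin 3 → ℝ) (i : Fin 3), ((ε * μ - dot3 g g)⁻¹ •
        (projMat ε μ g).mulVec v) i = (ε * μ - dot3 g g)⁻¹ *
          (v i - (ε * μ)⁻¹ * g i * (g 0 * v 0 + g 1 * v 1 + g 2 * v 2)) := by
      intro v i
      rw [projMat, Matrix.sub_mulVec, Matrix.one_mulVec]
      simp only [Pi.smul_apply, Pi.sub_apply, smul_eq_mul, Matrix.mulVec, dotProduct,
        Fin.sum_univ_three, Matrix.of_apply]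
      ring
    rw [hD] at hP hc ⊢
    have hd := inv_mul_cancel₀ hc
    generalize (ε * μ - (g 0 * g 0 + g 1 * g 1 + g 2 * g 2))⁻¹ = d at hP hd ⊢
    constructor
    · intro h
      obtain ⟨h1, h2⟩ := Prod.mk.inj h
      subst h1 h2
      constructor <;> ext i <;> rw [hP] <;> fin_cases i <;> simp [cross3] <;>
        field_simp <;> first
          | linear_combination (-(ε * μ * E 0)) * hd
          | linear_combination (-(ε * μ * E 1)) * hd
          | linear_combination (-(ε * μ * E 2)) * hd
          | linear_combination (-(ε * μ * H 0)) * hd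
          | linear_combination (-(ε * μ * H 1)) * hd
          | linear_combination (-(ε * μ * H 2)) * hd
    · rintro ⟨h1, h2⟩
      have e1 := fun i => (congrFun h1 i).trans (hP _ i)
      have e2 := fun i => (congrFun h2 i).trans (hP _ i)
      clear h1 h2
      refine Prod.ext ?_ ?_ <;> ext i <;> fin_cases i <;> simp [tentOp, cross3, e1, e2] <;>
        field_simp <;> first
          | linear_combination ((ε * μ * wE 0)) * hd
          | linear_combination ((ε * μ * wE 1)) * hd
          | linear_combination ((ε * μ * wE 2)) * hd
          | linear_combination ((ε * μ * wH 0)) * hd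
          | linear_combination ((ε * μ * wH 1)) * hd
          | linear_combination ((ε * μ * wH 2)) * hd
  refine ⟨⟨?_, ?_⟩, key⟩
  · rintro ⟨E, H⟩ ⟨E', H'⟩ h
    have a := (key _ _ E H).1 rfl
    have b := (key _ _ E' H').1 h.symm
    exact Prod.ext (a.1.trans b.1.symm) (a.2.trans b.2.symm)
  · rintro ⟨wE, wH⟩
    exact ⟨(_, _), (key wE wH _ _).2 ⟨rfl, rfl⟩⟩
end

section
/- Let ε, μ > 0, let Ω ⊆ ℝ³ be a measurable set, let γ < √(εμ), and let g : Ω → ℝ³ be measurable with |g(x)| ≤ γ for almost every x ∈ Ω. Define on L²(Ω; ℝ³×ℝ³) the bilinear form a(u, v) = ∫_Ω (εE − H×g)·v_E + (μH + E×g)·v_H dx for u = (E,H), v = (v_E, v_H). Let V be any finite-dimensional linear subspace of L²(Ω; ℝ³×ℝ³). Then for every w ∈ L²(Ω; ℝ³×ℝ³) there exists a unique û ∈ V such that a(û, v̂) = ∫_Ω w·v̂ dx for all v̂ ∈ V. -/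
open MeasureTheory

/-- Euclidean norm on `ℝ³`. -/
noncomputable def norm3 (u : Fin 3 → ℝ) : ℝ := Real.sqrt (dot3 u u)

/-- The mapped-tent bilinear form
`a(u, v) = ∫_Ω (εE − H×g)·v_E + (μH + E×g)·v_H dx` for `u = (E, H)`,
`v = (v_E, v_H)`. -/
noncomputable def aform (ε μ : ℝ) (Ω : Set (Fin 3 → ℝ))
    (g : (Fin 3 → ℝ) → (Fin 3 → ℝ))
    (u v : (Fin 3 → ℝ) → (Fin 3 → ℝ) × (Fin 3 → ℝ)) : ℝ :=
  ∫ x in Ω,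
    (dot3 (fun i => ε * (u x).1 i - cross3 (u x).2 (g x) i) ((v x).1)
      + dot3 (fun i => μ * (u x).2 i + cross3 (u x).1 (g x) i) ((v x).2))

/-- Pointwise integrand of the form. -/
def tentInt (ε μ : ℝ) (g : Fin 3 → ℝ) (p q : (Fin 3 → ℝ) × (Fin 3 → ℝ)) : ℝ :=
  dot3 (fun i => ε * p.1 i - cross3 p.2 g i) q.1
    + dot3 (fun i => μ * p.2 i + cross3 p.1 g i) q.2

lemma tentInt_add_left (ε μ : ℝ) (g : Fin 3 → ℝ) (p p' q : (Fin 3 → ℝ) × (Fin 3 → ℝ)) :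
    tentInt ε μ g (p + p') q = tentInt ε μ g p q + tentInt ε μ g p' q := by
  simp [tentInt, dot3, cross3, Fin.sum_univ_three]; ring

lemma tentInt_smul_left (ε μ c : ℝ) (g : Fin 3 → ℝ) (p q : (Fin 3 → ℝ) × (Fin 3 → ℝ)) :
    tentInt ε μ g (c • p) q = c * tentInt ε μ g p q := by
  simp [tentInt, dot3, cross3, Fin.sum_univ_three]; ring

lemma tentInt_add_right (ε μ : ℝ) (g : Fin 3 → ℝ) (p q q' : (Fin 3 → ℝ) × (Fin 3 → ℝ)) :
    tentInt ε μ g p (q + q') = tentInt ε μ g p q + tentInt ε μ g p q' := by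
  simp [tentInt, dot3, cross3, Fin.sum_univ_three]; ring

lemma tentInt_smul_right (ε μ c : ℝ) (g : Fin 3 → ℝ) (p q : (Fin 3 → ℝ) × (Fin 3 → ℝ)) :
    tentInt ε μ g p (c • q) = c * tentInt ε μ g p q := by
  simp [tentInt, dot3, cross3, Fin.sum_univ_three]; ring

lemma dot3_self_nonneg (u : Fin 3 → ℝ) : 0 ≤ dot3 u u :=
  Finset.sum_nonneg fun i _ => mul_self_nonneg (u i)

lemma dot3_self_eq_zero {u : Fin 3 → ℝ} (h : dot3 u u = 0) : u = 0 := by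
  funext i
  have := (Finset.sum_eq_zero_iff_of_nonneg
    (fun i _ => mul_self_nonneg (u i))).1 h i (Finset.mem_univ i)
  simpa using this

lemma dot3_cauchy (u v : Fin 3 → ℝ) : dot3 u v ^ 2 ≤ dot3 u u * dot3 v v := by
  simp only [dot3, Fin.sum_univ_three]
  nlinarith [sq_nonneg (u 0 * v 1 - u 1 * v 0), sq_nonneg (u 0 * v 2 - u 2 * v 0),
    sq_nonneg (u 1 * v 2 - u 2 * v 1)]

lemma cross3_bound (u v : Fin 3 → ℝ) :
    dot3 (cross3 u v) (cross3 u v) ≤ dot3 u u * dot3 v v := by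
  have h : dot3 (cross3 u v) (cross3 u v) = dot3 u u * dot3 v v - dot3 u v ^ 2 := by
    simp [dot3, cross3, Fin.sum_univ_three]; ring
  rw [h]; linarith [sq_nonneg (dot3 u v)]

lemma tentInt_self (ε μ : ℝ) (g : Fin 3 → ℝ) (p : (Fin 3 → ℝ) × (Fin 3 → ℝ)) :
    tentInt ε μ g p p
      = ε * dot3 p.1 p.1 + μ * dot3 p.2 p.2 - 2 * dot3 (cross3 p.2 g) p.1 := by
  simp [tentInt, dot3, cross3, Fin.sum_univ_three]; ring

lemma quad_pos {ε μ a b c T : ℝ} (hε : 0 < ε) (hμ : 0 < μ) (ha : 0 ≤ a) (hb : 0 ≤ b)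
    (hc : c < ε * μ) (hT : T ^ 2 ≤ b * c * a) :
    0 ≤ ε * a + μ * b - 2 * T ∧ (ε * a + μ * b - 2 * T = 0 → a = 0 ∧ b = 0) := by
  have hab : 0 ≤ a * b := mul_nonneg ha hb
  have hS : 0 ≤ ε * a + μ * b := by positivity
  have h1 : 4 * (ε * μ) * (a * b) ≤ (ε * a + μ * b) ^ 2 := by
    nlinarith [sq_nonneg (ε * a - μ * b)]
  have h2 : (a * b) * c ≤ (a * b) * (ε * μ) := mul_le_mul_of_nonneg_left hc.le hab
  constructor
  · have : (2 * T) ^ 2 ≤ (ε * a + μ * b) ^ 2 := by nlinarith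
    have := abs_le_of_sq_le_sq' this hS
    linarith [this.2]
  · intro h
    have hTS : ε * a + μ * b = 2 * T := by linarith
    rw [hTS] at h1
    have h3 : (a * b) * (ε * μ - c) ≤ 0 := by nlinarith
    have h4 : a * b = 0 := by
      by_contra hne
      have : 0 < a * b := lt_of_le_of_ne hab (Ne.symm hne)
      have := mul_pos this (sub_pos.2 hc)
      linarith
    have h5 : T ^ 2 ≤ 0 := by
      have : b * c * a = a * b * c := by ring
      rw [this, h4] at hT; simpa using hT
    have h6 : T = 0 := by nlinarith [sq_nonneg T, pow_eq_zero_iff (two_ne_zero) |>.1 (le_antisymm h5 (sq_nonneg T))]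
    have h7 : 0 ≤ ε * a := by positivity
    have h8 : 0 ≤ μ * b := by positivity
    have h9 : ε * a = 0 := by linarith
    have h10 : μ * b = 0 := by linarith
    exact ⟨(mul_eq_zero.1 h9).resolve_left hε.ne', (mul_eq_zero.1 h10).resolve_left hμ.ne'⟩

lemma tentInt_pos {ε μ : ℝ} (hε : 0 < ε) (hμ : 0 < μ) {g : Fin 3 → ℝ}
    (hg : norm3 g < Real.sqrt (ε * μ)) (p : (Fin 3 → ℝ) × (Fin 3 → ℝ)) :
    0 ≤ tentInt ε μ g p p ∧ (tentInt ε μ g p p = 0 → p = 0) := by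
  have hc : dot3 g g < ε * μ := (Real.sqrt_lt_sqrt_iff (dot3_self_nonneg g)).1 hg
  have hT : dot3 (cross3 p.2 g) p.1 ^ 2 ≤ dot3 p.2 p.2 * dot3 g g * dot3 p.1 p.1 :=
    (dot3_cauchy _ _).trans
      (mul_le_mul_of_nonneg_right (cross3_bound _ _) (dot3_self_nonneg _))
  have := quad_pos hε hμ (dot3_self_nonneg p.1) (dot3_self_nonneg p.2) hc hT
  rw [tentInt_self]
  refine ⟨this.1, fun h => ?_⟩
  obtain ⟨h1, h2⟩ := this.2 h
  exact Prod.ext (dot3_self_eq_zero h1) (dot3_self_eq_zero h2)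

lemma abs_le_norm3 (g : Fin 3 → ℝ) (i : Fin 3) : |g i| ≤ norm3 g := by
  apply Real.le_sqrt_of_sq_le
  rw [sq_abs, sq]
  exact Finset.single_le_sum (f := fun i => g i * g i)
    (fun i _ => mul_self_nonneg (g i)) (Finset.mem_univ i)

section
variable {ν : Measure (Fin 3 → ℝ)}

lemma memLp_fst (u : Lp ((Fin 3 → ℝ) × (Fin 3 → ℝ)) 2 ν) (i : Fin 3) :
    MemLp (fun x => (u x).1 i) 2 ν := by
  refine MemLp.of_le (Lp.memLp u) ?_ (Filter.Eventually.of_forall fun x => ?_)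
  · exact ((continuous_apply i).comp continuous_fst).comp_aestronglyMeasurable
      (Lp.aestronglyMeasurable u)
  · exact (norm_le_pi_norm _ i).trans (norm_fst_le _)

lemma memLp_snd (u : Lp ((Fin 3 → ℝ) × (Fin 3 → ℝ)) 2 ν) (i : Fin 3) :
    MemLp (fun x => (u x).2 i) 2 ν := by
  refine MemLp.of_le (Lp.memLp u) ?_ (Filter.Eventually.of_forall fun x => ?_)
  · exact ((continuous_apply i).comp continuous_snd).comp_aestronglyMeasurable
      (Lp.aestronglyMeasurable u)
  · exact (norm_le_pi_norm _ i).trans (norm_snd_le _)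

lemma memLp_mul_g {g : (Fin 3 → ℝ) → (Fin 3 → ℝ)} (hg : Measurable g) {γ : ℝ}
    (hb : ∀ᵐ x ∂ν, norm3 (g x) ≤ γ) {f : (Fin 3 → ℝ) → ℝ} (hf : MemLp f 2 ν) (i : Fin 3) :
    MemLp (fun x => f x * g x i) 2 ν := by
  refine MemLp.of_le_mul (c := γ) hf
    (hf.1.mul ((measurable_pi_apply i).comp hg).aestronglyMeasurable) ?_
  filter_upwards [hb] with x hx
  rw [norm_mul, mul_comm]
  exact mul_le_mul_of_nonneg_right ((abs_le_norm3 _ i).trans hx) (norm_nonneg _)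

lemma tentInt_integrable (ε μ : ℝ) {g : (Fin 3 → ℝ) → (Fin 3 → ℝ)} (hg : Measurable g) {γ : ℝ}
    (hb : ∀ᵐ x ∂ν, norm3 (g x) ≤ γ) (u v : Lp ((Fin 3 → ℝ) × (Fin 3 → ℝ)) 2 ν) :
    Integrable (fun x => tentInt ε μ (g x) (u x) (v x)) ν := by
  have hE : ∀ i, MemLp (fun x => ε * (u x).1 i - cross3 (u x).2 (g x) i) 2 ν := by
    intro i
    refine ((memLp_fst u i).const_mul ε).sub ?_
    fin_cases i
    · exact (memLp_mul_g hg hb (memLp_snd u 1) 2).sub (memLp_mul_g hg hb (memLp_snd u 2) 1)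
    · exact (memLp_mul_g hg hb (memLp_snd u 2) 0).sub (memLp_mul_g hg hb (memLp_snd u 0) 2)
    · exact (memLp_mul_g hg hb (memLp_snd u 0) 1).sub (memLp_mul_g hg hb (memLp_snd u 1) 0)
  have hH : ∀ i, MemLp (fun x => μ * (u x).2 i + cross3 (u x).1 (g x) i) 2 ν := by
    intro i
    refine ((memLp_snd u i).const_mul μ).add ?_
    fin_cases i
    · exact (memLp_mul_g hg hb (memLp_fst u 1) 2).sub (memLp_mul_g hg hb (memLp_fst u 2) 1)
    · exact (memLp_mul_g hg hb (memLp_fst u 2) 0).sub (memLp_mul_g hg hb (memLp_fst u 0) 2)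
    · exact (memLp_mul_g hg hb (memLp_fst u 0) 1).sub (memLp_mul_g hg hb (memLp_fst u 1) 0)
  unfold tentInt dot3
  exact (integrable_finsetSum _ fun i _ => (hE i).integrable_mul (memLp_fst v i)).add
    (integrable_finsetSum _ fun i _ => (hH i).integrable_mul (memLp_snd v i))

/-- The form as a bilinear map on `L²`. -/
noncomputable def tentForm (ε μ : ℝ) {g : (Fin 3 → ℝ) → (Fin 3 → ℝ)} (hg : Measurable g) {γ : ℝ}
    (hb : ∀ᵐ x ∂ν, norm3 (g x) ≤ γ) :
    Lp ((Fin 3 → ℝ) × (Fin 3 → ℝ)) 2 ν →ₗ[ℝ] Lp ((Fin 3 → ℝ) × (Fin 3 → ℝ)) 2 ν →ₗ[ℝ] ℝ :=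
  LinearMap.mk₂ ℝ (fun u v => ∫ x, tentInt ε μ (g x) (u x) (v x) ∂ν)
    (by
      intro u u' v
      rw [← integral_add (tentInt_integrable ε μ hg hb u v) (tentInt_integrable ε μ hg hb u' v)]
      refine integral_congr_ae ?_
      filter_upwards [Lp.coeFn_add u u'] with x hx
      rw [hx, Pi.add_apply, tentInt_add_left])
    (by
      intro c u v
      rw [smul_eq_mul, ← integral_const_mul]
      refine integral_congr_ae ?_
      filter_upwards [Lp.coeFn_smul c u] with x hx
      rw [hx, Pi.smul_apply, tentInt_smul_left])
    (by
      intro u v v'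
      rw [← integral_add (tentInt_integrable ε μ hg hb u v) (tentInt_integrable ε μ hg hb u v')]
      refine integral_congr_ae ?_
      filter_upwards [Lp.coeFn_add v v'] with x hx
      rw [hx, Pi.add_apply, tentInt_add_right])
    (by
      intro c u v
      rw [smul_eq_mul, ← integral_const_mul]
      refine integral_congr_ae ?_
      filter_upwards [Lp.coeFn_smul c v] with x hx
      rw [hx, Pi.smul_apply, tentInt_smul_right])

lemma tentForm_apply (ε μ : ℝ) {g : (Fin 3 → ℝ) → (Fin 3 → ℝ)} (hg : Measurable g) {γ : ℝ}
    (hb : ∀ᵐ x ∂ν, norm3 (g x) ≤ γ) (u v : Lp ((Fin 3 → ℝ) × (Fin 3 → ℝ)) 2 ν) :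
    tentForm ε μ hg hb u v = ∫ x, tentInt ε μ (g x) (u x) (v x) ∂ν := rfl

lemma tentForm_definite {ε μ : ℝ} (hε : 0 < ε) (hμ : 0 < μ)
    {g : (Fin 3 → ℝ) → (Fin 3 → ℝ)} (hg : Measurable g) {γ : ℝ}
    (hγ : γ < Real.sqrt (ε * μ))
    (hb : ∀ᵐ x ∂ν, norm3 (g x) ≤ γ) (u : Lp ((Fin 3 → ℝ) × (Fin 3 → ℝ)) 2 ν)
    (h : tentForm ε μ hg hb u u = 0) : u = 0 := by
  rw [tentForm_apply, integral_eq_zero_iff_of_nonneg_ae _ (tentInt_integrable ε μ hg hb u u)] at h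
  · rw [Lp.eq_zero_iff_ae_eq_zero]
    filter_upwards [h, hb] with x hx hgx
    exact (tentInt_pos hε hμ (hgx.trans_lt hγ) (u x)).2 hx
  · filter_upwards [hb] with x hgx
    exact (tentInt_pos hε hμ (hgx.trans_lt hγ) (u x)).1

end

/-- Unique solvability of the semidiscrete mapped-tent problem on any
finite-dimensional subspace `V` of `L²(Ω; ℝ³ × ℝ³)` under the causality condition
`|g| ≤ γ < √(εμ)` a.e.: for every `w ∈ L²(Ω; ℝ³ × ℝ³)` there is a unique `û ∈ V`
with `a(û, v̂) = ∫_Ω w · v̂` for all `v̂ ∈ V`. -/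
theorem tent_mass_matrix_invertible (ε μ γ : ℝ) (hε : 0 < ε) (hμ : 0 < μ)
    (Ω : Set (Fin 3 → ℝ)) (hΩ : MeasurableSet Ω)
    (g : (Fin 3 → ℝ) → (Fin 3 → ℝ)) (hgmeas : Measurable g)
    (hγ : γ < Real.sqrt (ε * μ))
    (hbound : ∀ᵐ x ∂(volume.restrict Ω), norm3 (g x) ≤ γ)
    (V : Submodule ℝ (Lp ((Fin 3 → ℝ) × (Fin 3 → ℝ)) 2 (volume.restrict Ω)))
    (hV : FiniteDimensional ℝ V)
    (w : Lp ((Fin 3 → ℝ) × (Fin 3 → ℝ)) 2 (volume.restrict Ω)) :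
    ∃! uh : V,
      ∀ vh : V,
        aform ε μ Ω g (uh : Lp ((Fin 3 → ℝ) × (Fin 3 → ℝ)) 2 (volume.restrict Ω))
            (vh : Lp ((Fin 3 → ℝ) × (Fin 3 → ℝ)) 2 (volume.restrict Ω))
          = ∫ x in Ω,
              (dot3 ((w : (Fin 3 → ℝ) → (Fin 3 → ℝ) × (Fin 3 → ℝ)) x).1
                  (((vh : Lp ((Fin 3 → ℝ) × (Fin 3 → ℝ)) 2 (volume.restrict Ω)) :
                    (Fin 3 → ℝ) → (Fin 3 → ℝ) × (Fin 3 → ℝ)) x).1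
                + dot3 ((w : (Fin 3 → ℝ) → (Fin 3 → ℝ) × (Fin 3 → ℝ)) x).2
                  (((vh : Lp ((Fin 3 → ℝ) × (Fin 3 → ℝ)) 2 (volume.restrict Ω)) :
                    (Fin 3 → ℝ) → (Fin 3 → ℝ) × (Fin 3 → ℝ)) x).2) := by
  have h0 : ∀ᵐ x ∂(volume.restrict Ω), norm3 ((fun _ => 0 : (Fin 3 → ℝ) → (Fin 3 → ℝ)) x) ≤ 0 :=
    Filter.Eventually.of_forall fun x => by simp [norm3, dot3]
  let A : V →ₗ[ℝ] Module.Dual ℝ V :=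
    ((tentForm ε μ hgmeas hbound).domRestrict₁₂ V V)
  let L : Module.Dual ℝ V := (tentForm 1 1 measurable_const h0 w).domRestrict V
  have hinj : Function.Injective A := by
    rw [← LinearMap.ker_eq_bot, LinearMap.ker_eq_bot']
    intro u hu
    have h1 : tentForm ε μ hgmeas hbound u u = 0 := LinearMap.congr_fun hu u
    exact Subtype.ext (tentForm_definite hε hμ hgmeas hγ hbound _ h1)
  have hsurj : Function.Surjective A :=
    (LinearMap.injective_iff_surjective_of_finrank_eq_finrank
      (Subspace.dual_finrank_eq).symm).1 hinj
  have key : ∀ uh : V, A uh = L ↔ ∀ vh : V,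
        aform ε μ Ω g (uh : Lp ((Fin 3 → ℝ) × (Fin 3 → ℝ)) 2 (volume.restrict Ω))
            (vh : Lp ((Fin 3 → ℝ) × (Fin 3 → ℝ)) 2 (volume.restrict Ω))
          = ∫ x in Ω,
              (dot3 ((w : (Fin 3 → ℝ) → (Fin 3 → ℝ) × (Fin 3 → ℝ)) x).1
                  (((vh : Lp ((Fin 3 → ℝ) × (Fin 3 → ℝ)) 2 (volume.restrict Ω)) :
                    (Fin 3 → ℝ) → (Fin 3 → ℝ) × (Fin 3 → ℝ)) x).1
                + dot3 ((w : (Fin 3 → ℝ) → (Fin 3 → ℝ) × (Fin 3 → ℝ)) x).2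
                  (((vh : Lp ((Fin 3 → ℝ) × (Fin 3 → ℝ)) 2 (volume.restrict Ω)) :
                    (Fin 3 → ℝ) → (Fin 3 → ℝ) × (Fin 3 → ℝ)) x).2) := by
    intro uh
    rw [LinearMap.ext_iff]
    refine forall_congr' fun vh => ?_
    have hL : L vh = ∫ x in Ω,
              (dot3 ((w : (Fin 3 → ℝ) → (Fin 3 → ℝ) × (Fin 3 → ℝ)) x).1
                  (((vh : Lp ((Fin 3 → ℝ) × (Fin 3 → ℝ)) 2 (volume.restrict Ω)) :
                    (Fin 3 → ℝ) → (Fin 3 → ℝ) × (Fin 3 → ℝ)) x).1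
                + dot3 ((w : (Fin 3 → ℝ) → (Fin 3 → ℝ) × (Fin 3 → ℝ)) x).2
                  (((vh : Lp ((Fin 3 → ℝ) × (Fin 3 → ℝ)) 2 (volume.restrict Ω)) :
                    (Fin 3 → ℝ) → (Fin 3 → ℝ) × (Fin 3 → ℝ)) x).2) := by
      change tentForm 1 1 measurable_const h0 w vh = _
      rw [tentForm_apply]
      congr 1
      funext x
      simp [tentInt, dot3, cross3, Fin.sum_univ_three]
    rw [hL]
    exact Iff.rfl
  obtain ⟨uh, hu⟩ := hsurj L
  refine ⟨uh, (key uh).1 hu, fun y hy => hinj ?_⟩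
  rw [hu]
  exact (key y).2 hy
end
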